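/- In Λ, for all natural numbers n ≥ 2 and m ≥ 0, the identity (n+m−1)·v(n)v(m) = n·m·v(1)v(n+m−1) − (n−1)(m−1)·v(0)v(n+m) + n(n−1)·v(n+m−1) holds. (These are the relations of the Gröbner–Shirshov basis of A₊(U(3)).) -/

import Mathlib

/-- The generator `v(n)` in the free associative ℚ-algebra on countably many
generators. -/
noncomputable def vf (n : ℕ) : FreeAlgebra ℚ ℕ := FreeAlgebra.ι ℚ n

/-- The defining relations of `Λ` (the unitalization of `A₊(U(3))`):
* locality: for `n ≥ 3` (written `n = k + 3`) and `m ≥ 0`,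
  `v(n)v(m) - 3v(n-1)v(m+1) + 3v(n-2)v(m+2) - v(n-3)v(m+3) = 0`;
* commutator: for `n > m ≥ 0` (written `n = m + k + 1`),
  `v(n)v(m) - v(m)v(n) = (n - m)·v(n+m-1)`. -/
inductive LambdaRel : FreeAlgebra ℚ ℕ → FreeAlgebra ℚ ℕ → Prop
  | locality (k m : ℕ) :
      LambdaRel (vf (k + 3) * vf m + 3 * (vf (k + 1) * vf (m + 2)))
        (3 * (vf (k + 2) * vf (m + 1)) + vf k * vf (m + 3))
  | commutator (m k : ℕ) :
      LambdaRel (vf (m + k + 1) * vf m)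
        (vf m * vf (m + k + 1) + ((k : ℚ) + 1) • vf (2 * m + k))

/-- The unital associative ℚ-algebra `Λ` presented by the generators `v(n)`,
`n ∈ ℕ`, and the relations `LambdaRel`. -/
abbrev Lambda : Type := RingQuot LambdaRel

/-- The generator `v(n)` of `Λ`. -/
noncomputable def v (n : ℕ) : Lambda := RingQuot.mkAlgHom ℚ LambdaRel (vf n)

theorem v_loc (k m : ℕ) : v (k + 3) * v m + (3 : ℚ) • (v (k + 1) * v (m + 2)) =
    (3 : ℚ) • (v (k + 2) * v (m + 1)) + v k * v (m + 3) := by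
  have h := RingQuot.mkAlgHom_rel ℚ (LambdaRel.locality k m)
  simp only [map_add, map_mul, map_ofNat] at h
  have e : ∀ x : Lambda, (3 : ℚ) • x = 3 * x := fun x => by
    rw [Algebra.smul_def, map_ofNat]
  rw [e, e]
  exact h

theorem v_comm (k : ℕ) : v (k + 1) * v 0 = v 0 * v (k + 1) + ((k : ℚ) + 1) • v k := by
  have h := RingQuot.mkAlgHom_rel ℚ (LambdaRel.commutator 0 k)
  simp only [map_add, map_mul, map_smul, Nat.zero_add, Nat.mul_zero] at h
  exact h

theorem v_quad (s i : ℕ) : ∀ j, i + j = s + 2 →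
    v i * v j = v 0 * v (s + 2) + (i : ℚ) • (v 1 * v (s + 1) - v 0 * v (s + 2))
      + ((i : ℚ) * (i - 1) / 2) •
        (v 2 * v s - (2 : ℚ) • (v 1 * v (s + 1)) + v 0 * v (s + 2)) := by
  induction i using Nat.strong_induction_on with
  | _ i ih =>
    intro j hj
    match i, ih, hj with
    | 0, ih, hj =>
      obtain rfl : j = s + 2 := by omega
      simp
    | 1, ih, hj =>
      obtain rfl : j = s + 1 := by omega
      simp
    | 2, ih, hj =>
      obtain rfl : j = s := by omega
      push_cast
      module
    | k + 3, ih, hj =>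
      have h0 := ih k (by omega) (j + 3) (by omega)
      have h1 := ih (k + 1) (by omega) (j + 2) (by omega)
      have h2 := ih (k + 2) (by omega) (j + 1) (by omega)
      have h := v_loc k j
      push_cast at h0 h1 h2 ⊢
      linear_combination (norm := module) h + h0 - (3 : ℚ) • h1 + (3 : ℚ) • h2

/-- in `Λ`, for all `n ≥ 2` and `m ≥ 0`,
`(n+m-1)·v(n)v(m) = nm·v(1)v(n+m-1) - (n-1)(m-1)·v(0)v(n+m) + n(n-1)·v(n+m-1)`
(the relations of the Gröbner–Shirshov basis of `A₊(U(3))`). -/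
theorem gsb_relations (n m : ℕ) (hn : 2 ≤ n) :
    ((n : ℚ) + (m : ℚ) - 1) • (v n * v m) =
      ((n : ℚ) * (m : ℚ)) • (v 1 * v (n + m - 1))
        - (((n : ℚ) - 1) * ((m : ℚ) - 1)) • (v 0 * v (n + m))
        + ((n : ℚ) * ((n : ℚ) - 1)) • v (n + m - 1) := by
  obtain ⟨s, hs⟩ : ∃ s, n + m = s + 2 := ⟨n + m - 2, by omega⟩
  have e : n + m - 1 = s + 1 := by omega
  have hq := v_quad s n m hs
  have hl := v_quad s (s + 2) 0 (by omega)
  have hc := v_comm (s + 1)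
  rw [e, hs]
  have hm : (m : ℚ) = s + 2 - n := by
    have : (n : ℚ) + m = s + 2 := by exact_mod_cast hs
    linarith
  rw [hm]
  push_cast at hl hc
  have hs0 : (s : ℚ) + 2 ≠ 0 := by positivity
  have key : (((s : ℚ) + 1) / 2) •
      (v 2 * v s - (2 : ℚ) • (v 1 * v (s + 1)) + v 0 * v (s + 2))
      = v (s + 1) - v 1 * v (s + 1) + v 0 * v (s + 2) := by
    have h3 : ((s : ℚ) + 2) • ((((s : ℚ) + 1) / 2) •
      (v 2 * v s - (2 : ℚ) • (v 1 * v (s + 1)) + v 0 * v (s + 2)))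
      = ((s : ℚ) + 2) • (v (s + 1) - v 1 * v (s + 1) + v 0 * v (s + 2)) := by
      linear_combination (norm := module) hc - hl
    exact smul_right_injective _ hs0 h3
  linear_combination (norm := module) ((s : ℚ) + 1) • hq + ((n : ℚ) * (n - 1)) • key
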